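/- Let N ∈ ℕ, let ε > 0 and δ > 0 be real numbers, let m, x : ℕ → ℝ with Σ_{n=1}^{N} x_n² ≤ ε, and set U_n := Σ_{i=1}^{n} (x_i − m_i) (the deviation of the price process S_n = S_0 + Σ x_i from the drift process T_n = S_0 + Σ m_i). Let τ be the least n ≤ N such that |U_n| ≥ δ, and τ := N if no such n exists. Define the capital process I_n := 1 + (1/ε)·Σ_{i=1}^{min(n,τ)} (2·U_{i−1} − 2·m_i)·(x_i − m_i). Then: (i) I_n ≥ 0 for every n ≤ N; and (ii) if |U_n| ≥ δ for some n ≤ N, then I_N ≥ δ²/ε. (Finitary form of the drift-SDE theorem: if the quadratic variation Σ x_n² of Reality's increments is at most ε while the price deviates from the drift process by δ, Skeptic multiplies his capital by at least δ²/ε without risking bankruptcy.) -/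

import Mathlib

/-!
Since `(2 U_{i-1} - 2 m_i)(x_i - m_i) = U_i² - U_{i-1}² - x_i² + m_i²`, Skeptic's gains telescope:
up to time `k` they sum to `(U_k² - ∑ x_i² + ∑ m_i²) / ε` (`sum_gain_eq`). The quadratic
variation is at most `ε`, so the initial capital `1` covers the `x_i²` term and the stopped capital
always dominates `U² / ε` at the stopped time (`dev_sq_div_le_capDrift`). This is nonnegative,
and at least `δ² / ε` once the level `δ` has been hit.
-/

open Classical in
/-- The first time `n ≤ N` at which `|g n| ≥ δ`; equal to `N` if there is no such time. -/
noncomputable def hitTime (g : ℕ → ℝ) (δ : ℝ) (N : ℕ) : ℕ :=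
  if h : ∃ n, n ≤ N ∧ δ ≤ |g n| then Nat.find h else N

/-- The deviation `U_n = ∑_{i=1}^n (x_i - m_i)` of the price process
`S_n = S_0 + ∑_{i=1}^n x_i` from the drift process `T_n = S_0 + ∑_{i=1}^n m_i`. -/
def dev (m x : ℕ → ℝ) (n : ℕ) : ℝ := ∑ i ∈ Finset.range n, (x (i + 1) - m (i + 1))

/-- Skeptic's capital process starting from 1, betting
`M_i = (1/ε)(2 U_{i-1} - 2 m_i)` on `x_i - m_i` for `i ≤ τ` and `0` afterwards, where
`τ` is the first time `n ≤ N` at which `|U_n| ≥ δ` (and `τ = N` if there is none). -/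
noncomputable def capDrift (m x : ℕ → ℝ) (ε δ : ℝ) (N n : ℕ) : ℝ :=
  1 + (1 / ε) *
      ∑ i ∈ Finset.range (min n (hitTime (dev m x) δ N)),
        (2 * dev m x i - 2 * m (i + 1)) * (x (i + 1) - m (i + 1))

theorem sum_gain_eq (m x : ℕ → ℝ) (k : ℕ) :
    ∑ i ∈ Finset.range k, (2 * dev m x i - 2 * m (i + 1)) * (x (i + 1) - m (i + 1)) =
      dev m x k ^ 2 - ∑ i ∈ Finset.range k, x (i + 1) ^ 2
        + ∑ i ∈ Finset.range k, m (i + 1) ^ 2 := by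
  induction k with
  | zero => simp [dev]
  | succ k ih =>
    have hd : dev m x (k + 1) = dev m x k + (x (k + 1) - m (k + 1)) :=
      Finset.sum_range_succ _ _
    rw [Finset.sum_range_succ, ih, Finset.sum_range_succ, Finset.sum_range_succ, hd]
    ring

theorem hitTime_le (g : ℕ → ℝ) (δ : ℝ) (N : ℕ) : hitTime g δ N ≤ N := by
  classical
  unfold hitTime
  split_ifs with h
  · exact (Nat.find_spec h).1
  · exact le_rfl

theorem le_abs_hitTime (g : ℕ → ℝ) (δ : ℝ) (N : ℕ) (h : ∃ n, n ≤ N ∧ δ ≤ |g n|) :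
    δ ≤ |g (hitTime g δ N)| := by
  classical
  unfold hitTime
  rw [dif_pos h]
  exact (Nat.find_spec h).2

/-- The initial capital pays for the quadratic variation, so the capital dominates the squared
deviation at the stopped time, divided by `ε`. -/
theorem dev_sq_div_le_capDrift (N : ℕ) (ε δ : ℝ) (hε : 0 < ε) (m x : ℕ → ℝ)
    (hQV : ∑ n ∈ Finset.range N, (x (n + 1)) ^ 2 ≤ ε) (n : ℕ) :
    dev m x (min n (hitTime (dev m x) δ N)) ^ 2 / ε ≤ capDrift m x ε δ N n := by
  unfold capDrift
  rw [sum_gain_eq]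
  set k := min n (hitTime (dev m x) δ N) with hk
  have hkN : k ≤ N := (min_le_right _ _).trans (hitTime_le _ _ _)
  have hx : ∑ i ∈ Finset.range k, x (i + 1) ^ 2 ≤ ε :=
    (Finset.sum_le_sum_of_subset_of_nonneg (Finset.range_subset_range.2 hkN)
      (fun _ _ _ => sq_nonneg _)).trans hQV
  have hm : 0 ≤ ∑ i ∈ Finset.range k, m (i + 1) ^ 2 :=
    Finset.sum_nonneg fun _ _ => sq_nonneg _
  rw [div_le_iff₀ hε, add_mul, one_div, mul_right_comm, inv_mul_cancel₀ hε.ne']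
  linarith

/-- Finitary form of the drift-SDE theorem: if the quadratic variation `∑ x_n²` of
Reality's increments is at most `ε` while the price deviates from the drift process by
`δ` at some `n ≤ N`, Skeptic's stopped strategy never goes bankrupt, and it multiplies
his capital by at least `δ²/ε`. -/
theorem drift_low_volatility_finitary (N : ℕ) (ε δ : ℝ) (hε : 0 < ε) (hδ : 0 < δ)
    (m x : ℕ → ℝ)
    (hQV : ∑ n ∈ Finset.range N, (x (n + 1)) ^ 2 ≤ ε) :
    (∀ n ≤ N, 0 ≤ capDrift m x ε δ N n) ∧
      ((∃ n ≤ N, δ ≤ |dev m x n|) → δ ^ 2 / ε ≤ capDrift m x ε δ N N) := by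
  have key := dev_sq_div_le_capDrift N ε δ hε m x hQV
  refine ⟨fun n _ => le_trans (by positivity) (key n), fun h => le_trans ?_ (key N)⟩
  rw [min_eq_right (hitTime_le _ _ _), ← sq_abs (dev m x _)]
  gcongr
  exact le_abs_hitTime _ _ _ h
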